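/- Let G : ℕ → ℕ be defined by G(0) = G(1) = 0 and, for n ≥ 2, G(n) = mex({G(i) XOR G(n−i−2) : 0 ≤ i ≤ n−2} ∪ {G(j) XOR 1 XOR G(n−j−1) : 0 ≤ j ≤ n−1}), where XOR is bitwise addition of natural numbers and mex(T) is the least nonnegative integer not in T. Then for every n ≥ 1, G(n) = 0 if and only if n ≡ 1 (mod 12). -/

import Mathlib

/-- `mex T` is the least nonnegative integer not in `T`. -/
noncomputable def mex (T : Finset ℕ) : ℕ := sInf {n : ℕ | n ∉ T}

/-- Grundy numbers of the Remove-a-Square game on a 2-by-`n` rectangle: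
`G 0 = G 1 = 0`, and for `n ≥ 2`,
`G n = mex ({G i XOR G (n-i-2) : 0 ≤ i ≤ n-2} ∪ {G j XOR 1 XOR G (n-j-1) : 0 ≤ j ≤ n-1})`. -/
noncomputable def G : ℕ → ℕ
  | 0 => 0
  | 1 => 0
  | n + 2 =>
      mex
        (((Finset.range (n + 1)).attach.image
            (fun i => G i.1 ^^^ G (n - i.1))) ∪
         ((Finset.range (n + 2)).attach.image
            (fun j => G j.1 ^^^ 1 ^^^ G (n + 1 - j.1))))
decreasing_by
  · have := Finset.mem_range.mp i.2; omega
  · omega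
  · have := Finset.mem_range.mp j.2; omega
  · omega

/-- Table of the first 84 Grundy numbers, four bits each. -/
def tableH : ℕ := 62612640678786078282110521048755562390185496263800404614847996675960073178614929670049440908338864640

/-- Closed form of the Grundy numbers: a table, then period 12. -/
def H (n : ℕ) : ℕ := (tableH / 16 ^ (if n < 84 then n else 72 + n % 12)) % 16

/-- `v` is the `H`-value of an option of the 2-by-`n` rectangle. -/
def Opt (n v : ℕ) : Prop :=
  (∃ i k, i + k + 2 = n ∧ H i ^^^ H k = v) ∨ (∃ i k, i + k + 1 = n ∧ H i ^^^ 1 ^^^ H k = v)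

/-- `H n` is the least excluded option value. -/
def Good (n : ℕ) : Prop := ¬ Opt n (H n) ∧ ∀ v < H n, Opt n v

theorem H_period (m : ℕ) (h : 72 ≤ m) : H (m + 12) = H m := by
  unfold H
  congr 3
  split_ifs <;> omega

theorem Opt_add (n v : ℕ) (h : 157 ≤ n) : Opt (n + 12) v ↔ Opt n v := by
  constructor
  · rintro (⟨i, k, e, rfl⟩ | ⟨i, k, e, rfl⟩)
    · left
      by_cases hi : 84 ≤ i
      · refine ⟨i - 12, k, by omega, ?_⟩
        rw [← H_period (i - 12) (by omega), Nat.sub_add_cancel (by omega)]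
      · refine ⟨i, k - 12, by omega, ?_⟩
        rw [← H_period (k - 12) (by omega), Nat.sub_add_cancel (by omega)]
    · right
      by_cases hi : 84 ≤ i
      · refine ⟨i - 12, k, by omega, ?_⟩
        rw [← H_period (i - 12) (by omega), Nat.sub_add_cancel (by omega)]
      · refine ⟨i, k - 12, by omega, ?_⟩
        rw [← H_period (k - 12) (by omega), Nat.sub_add_cancel (by omega)]
  · rintro (⟨i, k, e, rfl⟩ | ⟨i, k, e, rfl⟩)
    · left
      by_cases hi : 72 ≤ i
      · exact ⟨i + 12, k, by omega, by rw [H_period i hi]⟩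
      · exact ⟨i, k + 12, by omega, by rw [H_period k (by omega)]⟩
    · right
      by_cases hi : 72 ≤ i
      · exact ⟨i + 12, k, by omega, by rw [H_period i hi]⟩
      · exact ⟨i, k + 12, by omega, by rw [H_period k (by omega)]⟩

set_option maxRecDepth 100000 in
theorem base_not : ∀ n < 167, (∀ i < n + 1, H i ^^^ H (n - i) ≠ H (n + 2)) ∧
    (∀ i < n + 2, H i ^^^ 1 ^^^ H (n + 1 - i) ≠ H (n + 2)) := by
  decide +kernel

set_option maxRecDepth 100000 in
theorem base_all : ∀ n < 167, ∀ v < H (n + 2), (∃ i < n + 1, H i ^^^ H (n - i) = v) ∨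
    (∃ i < n + 2, H i ^^^ 1 ^^^ H (n + 1 - i) = v) := by
  decide +kernel

theorem Opt_iff (n v : ℕ) : Opt (n + 2) v ↔ (∃ i < n + 1, H i ^^^ H (n - i) = v) ∨
    (∃ i < n + 2, H i ^^^ 1 ^^^ H (n + 1 - i) = v) := by
  unfold Opt
  refine or_congr ⟨?_, ?_⟩ ⟨?_, ?_⟩
  · rintro ⟨i, k, e, h⟩
    refine ⟨i, by omega, ?_⟩
    rwa [show n - i = k by omega]
  · rintro ⟨i, hi, h⟩
    exact ⟨i, n - i, by omega, h⟩
  · rintro ⟨i, k, e, h⟩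
    refine ⟨i, by omega, ?_⟩
    rwa [show n + 1 - i = k by omega]
  · rintro ⟨i, hi, h⟩
    exact ⟨i, n + 1 - i, by omega, h⟩

theorem good (n : ℕ) : Good (n + 2) := by
  induction n using Nat.strong_induction_on with
  | _ n ih =>
    by_cases hn : n < 167
    · refine ⟨?_, fun v hv => (Opt_iff n v).2 (base_all n hn v hv)⟩
      rw [Opt_iff]
      rintro (⟨i, hi, h⟩ | ⟨i, hi, h⟩)
      · exact (base_not n hn).1 i hi h
      · exact (base_not n hn).2 i hi h
    · obtain ⟨m, rfl⟩ : ∃ m, n = m + 12 := ⟨n - 12, by omega⟩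
      have hm := ih m (by omega)
      unfold Good at *
      rw [show m + 12 + 2 = (m + 2) + 12 by omega, H_period _ (by omega)]
      simpa only [Opt_add (m + 2) _ (by omega)] using hm

theorem mex_eq (T : Finset ℕ) (h : ℕ) (h1 : h ∉ T) (h2 : ∀ v < h, v ∈ T) : mex T = h := by
  unfold mex
  apply le_antisymm
  · exact Nat.sInf_le h1
  · refine le_csInf ⟨h, h1⟩ fun b hb => ?_
    by_contra hlt
    exact hb (h2 b (by omega))

theorem G_eq_H (n : ℕ) : G n = H n := by
  induction n using Nat.strong_induction_on with
  | _ n ih =>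
    match n, ih with
    | 0, _ => rw [G]; decide +kernel
    | 1, _ => rw [G]; decide +kernel
    | n + 2, ih =>
      rw [G]
      have key : ∀ v, v ∈ (((Finset.range (n + 1)).attach.image
            (fun i => G i.1 ^^^ G (n - i.1))) ∪
         ((Finset.range (n + 2)).attach.image
            (fun j => G j.1 ^^^ 1 ^^^ G (n + 1 - j.1)))) ↔ Opt (n + 2) v := by
        intro v
        rw [Opt_iff]
        simp only [Finset.mem_union, Finset.mem_image, Finset.mem_attach, true_and,
          Subtype.exists, Finset.mem_range, exists_prop]
        refine or_congr (exists_congr fun i => and_congr_right fun hi => ?_)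
          (exists_congr fun i => and_congr_right fun hi => ?_)
        · rw [ih i (by omega), ih (n - i) (by omega)]
        · rw [ih i (by omega), ih (n + 1 - i) (by omega)]
      apply mex_eq
      · rw [key]; exact (good n).1
      · intro v hv
        rw [key]; exact (good n).2 v hv

theorem H_zero_base : ∀ n < 84, 1 ≤ n → (H n = 0 ↔ n % 12 = 1) := by
  decide +kernel

theorem H_zero (n : ℕ) (hn : 1 ≤ n) : H n = 0 ↔ n % 12 = 1 := by
  induction n using Nat.strong_induction_on with
  | _ n ih =>
    by_cases h : n < 84
    · exact H_zero_base n h hn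
    · have := ih (n - 12) (by omega) (by omega)
      rw [← H_period (n - 12) (by omega), Nat.sub_add_cancel (by omega)] at this
      rw [this]
      omega

/-- **Remove-a-Square P-positions.** For every `n ≥ 1`, the Grundy number `G n`
is `0` if and only if `n ≡ 1 (mod 12)`. -/
theorem remove_a_square_P_positions : ∀ n : ℕ, 1 ≤ n → (G n = 0 ↔ n % 12 = 1) := by
  intro n hn
  rw [G_eq_H]
  exact H_zero n hn
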